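/- In the quantum Borel algebra 𝒪_q(B⁺) of type SO_n the following column relations hold: (i) z_{sj} z_{tj} = q^{−1} z_{tj} z_{sj} whenever t < s ≤ j ≤ n, s ≠ t', and (if n is odd) j ≠ n₀; (ii) z_{t'j} z_{tj} = q^{−2} z_{tj} z_{t'j} − (q − q^{−1}) Σ_{r=j'}^{t−1} q^{r−t−1} z_{rj} z_{r'j} whenever t < t' ≤ j; (iii) if n is odd, z_{n₀ j} z_{tj} = q^{−1} z_{tj} z_{n₀ j} for all t < n₀ < j. -/

import Mathlib

noncomputable section
open scoped TensorProduct

namespace SOq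

/-- `pr n k = n + 1 - k`, the "primed" index `k'`. -/
def pr (n k : ℕ) : ℕ := n + 1 - k

/-- `2 ρ_i` as an integer. -/
def twoRho (n i : ℕ) : ℤ :=
  if 2 * i < n + 1 then (n : ℤ) - 2 * i
  else if 2 * i = n + 1 then 0
  else (n : ℤ) + 2 - 2 * i

/-- Entries of the matrix `J`: `c_{ij} = δ_{j,i'} q^{-ρ_i}` (with `q^{1/2} := v`). -/
def Jc (n : ℕ) (v : ℂ) (i j : ℕ) : ℂ :=
  if j = pr n i then v ^ (-(twoRho n i)) else 0

/-- R-matrix coefficients `R^{ij}_{ab}`. -/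
def Rc (n : ℕ) (q v : ℂ) (i j a b : ℕ) : ℂ :=
  q ^ (((if i = j then 1 else 0) - (if i = pr n j then 1 else 0) : ℤ)) *
      (if i = a then (1 : ℂ) else 0) * (if j = b then (1 : ℂ) else 0) +
    (if a < i then (1 : ℂ) else 0) * (q - q⁻¹) *
      ((if j = a then (1 : ℂ) else 0) * (if i = b then (1 : ℂ) else 0) -
        Jc n v j i * Jc n v a b)

/-- The free algebra on the generators `z_{ij}`. -/
abbrev FA : Type := FreeAlgebra ℂ (ℕ × ℕ)

def zf (i j : ℕ) : FA := FreeAlgebra.ι ℂ (i, j)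

/-- The FRT relation element `FRT(i,b,j,a)`. -/
def frtRel (n : ℕ) (q v : ℂ) (i b j a : ℕ) : FA :=
  ∑ k ∈ Finset.Icc 1 n, ∑ l ∈ Finset.Icc 1 n,
    (Rc n q v l k a b • (zf i k * zf j l) - Rc n q v j i k l • (zf k a * zf l b))

/-- Entry `(i,j)` of `z J zᵗ J⁻¹ - Id` (note `J⁻¹ = J`). -/
def orthRel₁ (n : ℕ) (v : ℂ) (i j : ℕ) : FA :=
  (∑ k ∈ Finset.Icc 1 n, ∑ l ∈ Finset.Icc 1 n, ∑ m ∈ Finset.Icc 1 n,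
      (Jc n v k l * Jc n v m j) • (zf i k * zf m l)) - (if i = j then (1 : FA) else 0)

/-- Entry `(i,j)` of `J zᵗ J⁻¹ z - Id`. -/
def orthRel₂ (n : ℕ) (v : ℂ) (i j : ℕ) : FA :=
  (∑ k ∈ Finset.Icc 1 n, ∑ l ∈ Finset.Icc 1 n, ∑ m ∈ Finset.Icc 1 n,
      (Jc n v i k * Jc n v l m) • (zf l k * zf m j)) - (if i = j then (1 : FA) else 0)

/-- The defining relations of the quantum Borel algebra `𝒪_q(B⁺) ⊆ 𝒪_q(SO_n)`. -/
inductive Rel (n : ℕ) (q v : ℂ) : FA → FA → Prop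
  | frt : ∀ i b j a : ℕ, i ∈ Finset.Icc 1 n → b ∈ Finset.Icc 1 n → j ∈ Finset.Icc 1 n →
      a ∈ Finset.Icc 1 n → Rel n q v (frtRel n q v i b j a) 0
  | orth₁ : ∀ i j : ℕ, i ∈ Finset.Icc 1 n → j ∈ Finset.Icc 1 n →
      Rel n q v (orthRel₁ n v i j) 0
  | orth₂ : ∀ i j : ℕ, i ∈ Finset.Icc 1 n → j ∈ Finset.Icc 1 n →
      Rel n q v (orthRel₂ n v i j) 0
  | lower : ∀ i j : ℕ, j < i → Rel n q v (zf i j) 0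
  | out : ∀ i j : ℕ, (i = 0 ∨ j = 0 ∨ n < i ∨ n < j) → Rel n q v (zf i j) 0

/-- The quantum Borel algebra `𝒪_q(B⁺)`. -/
abbrev OB (n : ℕ) (q v : ℂ) : Type := RingQuot (Rel n q v)

/-- The generators `z_{ij}` of `𝒪_q(B⁺)`. -/
def z (n : ℕ) (q v : ℂ) (i j : ℕ) : OB n q v :=
  RingQuot.mkAlgHom ℂ (Rel n q v) (zf i j)

end SOq

namespace SOq

lemma ssmul (n : ℕ) (q v : ℂ) (a b : ℂ) (x : OB n q v) : (a - b) • x = a • x - b • x :=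
  sub_smul a b x

lemma col_frt (n : ℕ) (q v : ℂ) (i j m : ℕ) (hi : i ∈ Finset.Icc 1 n) (hj : j ∈ Finset.Icc 1 n)
    (hm : m ∈ Finset.Icc 1 n) (hmm : 2 * m ≠ n + 1) (hij : i < j) :
    q • (z n q v i m * z n q v j m) =
      (q ^ (-(if j = pr n i then 1 else 0) : ℤ)) • (z n q v j m * z n q v i m)
      + (q - q⁻¹) • (z n q v i m * z n q v j m)
      - ((q - q⁻¹) * Jc n v i j) • ∑ k ∈ Finset.Icc 1 n,
          if k < j then Jc n v k (pr n k) • (z n q v k m * z n q v (pr n k) m) else 0 := by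
  have h := RingQuot.mkAlgHom_rel ℂ (Rel.frt (q := q) (v := v) i m j m hi hm hj hm)
  simp only [Finset.mem_Icc] at hi hj hm
  have hJ : Jc n v m m = 0 := by
    unfold Jc pr; rw [if_neg]; omega
  have h1 : ∀ k l, Rc n q v l k m m = if k = m then (if l = m then q else 0) else 0 := by
    intro k l
    have : ¬ m = pr n m := by unfold pr; omega
    unfold Rc
    rw [hJ]
    by_cases hk : k = m <;> by_cases hl : l = m <;> simp [hk, hl, this]
  have h2 : ∀ k l, Rc n q v j i k l =
      (if k = j then (if l = i then q ^ (-(if j = pr n i then 1 else 0) : ℤ) else 0) else 0)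
      + (if k = i then (if l = j then (q - q⁻¹) else 0) else 0)
      - (if l = pr n k then
        (if k < j then (q - q⁻¹) * Jc n v i j * Jc n v k (pr n k) else 0) else 0) := by
    intro k l
    have e1 : (j = k) = (k = j) := propext eq_comm
    have e2 : (i = l) = (l = i) := propext eq_comm
    have e3 : (i = k) = (k = i) := propext eq_comm
    have e4 : (j = l) = (l = j) := propext eq_comm
    have e5 : ¬ j = i := by omega
    have e6 : Jc n v k l = if l = pr n k then Jc n v k (pr n k) else 0 := by
      unfold Jc; simp
    unfold Rc
    simp only [e1, e2, e3, e4, e6, if_neg e5]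
    by_cases hk : k = i
    · subst hk
      have : ¬ k = j := by omega
      simp only [this, hij, if_true, if_false]
      split_ifs <;> simp <;> ring
    · simp only [hk, if_false]
      split_ifs <;> simp <;> ring
  simp only [frtRel, map_sum, map_sub, map_smul, map_mul, map_zero] at h
  simp only [h1, h2] at h
  have hpr : ∀ k ∈ Finset.Icc 1 n, pr n k ∈ Finset.Icc 1 n := by
    intro k hk; simp only [Finset.mem_Icc, pr] at *; omega
  change ∑ k ∈ Finset.Icc 1 n, ∑ l ∈ Finset.Icc 1 n, ((_ : ℂ) • (z n q v i k * z n q v j l)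
    - (_ : ℂ) • (z n q v k m * z n q v l m)) = 0 at h
  simp only [Finset.sum_sub_distrib, Finset.sum_add_distrib, ssmul, add_smul, ite_smul, zero_smul] at h
  have key : ∑ k ∈ Finset.Icc 1 n, ∑ l ∈ Finset.Icc 1 n, (if l = pr n k then
        (if k < j then ((q - q⁻¹) * Jc n v i j * Jc n v k (pr n k)) • (z n q v k m * z n q v l m)
          else 0) else 0) = ((q - q⁻¹) * Jc n v i j) • ∑ k ∈ Finset.Icc 1 n,
          if k < j then Jc n v k (pr n k) • (z n q v k m * z n q v (pr n k) m) else 0 := by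
    rw [Finset.smul_sum]
    refine Finset.sum_congr rfl fun k hk => ?_
    rw [Finset.sum_ite_eq', if_pos (hpr k hk)]
    split_ifs
    · rw [smul_smul]
    · simp
  rw [key] at h
  have sw : ∀ (a b : ℕ) (f : ℕ → ℕ → OB n q v), a ∈ Finset.Icc 1 n → b ∈ Finset.Icc 1 n →
      ∑ k ∈ Finset.Icc 1 n, ∑ l ∈ Finset.Icc 1 n,
        (if k = a then (if l = b then f k l else 0) else 0) = f a b := by
    intro a b f ha hb
    rw [Finset.sum_eq_single a]
    · simp only [if_true]
      rw [Finset.sum_ite_eq', if_pos hb]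
    · intro k _ hk; simp [hk]
    · intro h; exact absurd ha h
  rw [sw m m (fun k l => q • (z n q v i k * z n q v j l)) (by simpa using hm) (by simpa using hm),
    sw j i (fun k l => _ • (z n q v k m * z n q v l m)) (by simpa using hj) (by simpa using hi)] at h
  have sw2 := sw i j (fun k l => (q - q⁻¹) • (z n q v k m * z n q v l m)) (by simpa using hi) (by simpa using hj)
  simp only [ssmul, Finset.sum_sub_distrib, ite_sub_ite] at h sw2 ⊢
  rw [sw2] at h
  exact sub_eq_zero.mp h

lemma col_orth (n : ℕ) (q v : ℂ) (hv0 : v ≠ 0) (m : ℕ)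
    (hm : m ∈ Finset.Icc 1 n) (hmm : 2 * m ≠ n + 1) :
    ∑ k ∈ Finset.Icc 1 n, Jc n v k (pr n k) • (z n q v k m * z n q v (pr n k) m) = 0 := by
  have hpr : ∀ k ∈ Finset.Icc 1 n, pr n k ∈ Finset.Icc 1 n := by
    intro k hk; simp only [Finset.mem_Icc, pr] at *; omega
  have h := RingQuot.mkAlgHom_rel ℂ (Rel.orth₂ (q := q) (v := v) (pr n m) m (hpr m hm) hm)
  have hpp : pr n (pr n m) = m := by simp only [Finset.mem_Icc, pr] at *; omega
  have hne : ¬ pr n m = m := by simp only [Finset.mem_Icc, pr] at *; omega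
  simp only [orthRel₂, map_sum, map_sub, map_smul, map_mul, map_zero, hne, if_false, sub_zero] at h
  change ∑ k ∈ Finset.Icc 1 n, ∑ l ∈ Finset.Icc 1 n, ∑ p ∈ Finset.Icc 1 n,
    (_ : ℂ) • (z n q v l k * z n q v p m) = 0 at h
  rw [Finset.sum_eq_single m] at h
  · have hJ : Jc n v (pr n m) m ≠ 0 := by
      unfold Jc; rw [if_pos hpp.symm]; exact zpow_ne_zero _ hv0
    simp only [← smul_smul, ← Finset.smul_sum] at h
    have h' := (smul_eq_zero.mp h).resolve_left hJ
    rw [← h']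
    refine Finset.sum_congr rfl fun l hl => ?_
    rw [Finset.sum_eq_single (pr n l)]
    · intro p _ hp
      simp [Jc, hp]
    · intro hh; exact absurd (hpr l hl) hh
  · intro k _ hk
    have : Jc n v (pr n m) k = 0 := by unfold Jc; rw [hpp, if_neg hk]
    simp [this]
  · intro hh; exact absurd hm hh

lemma z_lower (n : ℕ) (q v : ℂ) (i j : ℕ) (h : j < i) : z n q v i j = 0 := by
  have := RingQuot.mkAlgHom_rel ℂ (Rel.lower (n := n) (q := q) (v := v) i j h)
  simpa [z] using this

lemma Jc_lo (n : ℕ) (q v : ℂ) (hv : v ^ 2 = q) (hv0 : v ≠ 0) (r t : ℕ)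
    (hr : 2 * r < n + 1) (ht : 2 * t < n + 1) :
    Jc n v t (pr n t) * Jc n v (pr n r) r = q ^ ((t : ℤ) - r) := by
  have hpp : r = pr n (pr n r) := by unfold pr; omega
  unfold Jc
  rw [if_pos rfl, if_pos hpp, ← zpow_add₀ hv0, ← hv, ← zpow_natCast, ← zpow_mul]
  congr 1
  have h1 : ¬ 2 * pr n r < n + 1 := by unfold pr; omega
  have h2 : ¬ 2 * pr n r = n + 1 := by unfold pr; omega
  unfold twoRho
  rw [if_pos ht, if_neg h1, if_neg h2]
  have : ((pr n r : ℕ) : ℤ) = n + 1 - r := by unfold pr; omega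
  rw [this]; push_cast; ring

/-- `y_t` in terms of the lower `y_r`. -/
lemma col_step (n : ℕ) (q v : ℂ) (hq0 : q ≠ 0) (hv : v ^ 2 = q) (t m : ℕ) (ht : 1 ≤ t)
    (htt : t < pr n t) (htm : pr n t ≤ m) (hm : m ≤ n) :
    z n q v (pr n t) m * z n q v t m = (q ^ (-2 : ℤ)) • (z n q v t m * z n q v (pr n t) m)
      - ((1 - q ^ (-2 : ℤ)) * q ^ (t : ℤ)) • ∑ r ∈ Finset.Ico (pr n m) t,
        (q ^ (-(r : ℤ))) • (z n q v (pr n r) m * z n q v r m) := by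
  have hv0 : v ≠ 0 := by rintro rfl; apply hq0; rw [← hv]; simp
  have hb : pr n t = n + 1 - t := rfl
  have hb' : pr n m = n + 1 - m := rfl
  have hmm : 2 * m ≠ n + 1 := by omega
  have hm1 : m ∈ Finset.Icc 1 n := by simp only [Finset.mem_Icc]; omega
  have h := col_frt n q v t (pr n t) m (by simp only [Finset.mem_Icc]; omega)
    (by simp only [Finset.mem_Icc]; omega) hm1 hmm htt
  have ho := col_orth n q v hv0 m hm1 hmm
  rw [if_pos rfl] at h
  have hS : (∑ k ∈ Finset.Icc 1 n,
      if k < pr n t then Jc n v k (pr n k) • (z n q v k m * z n q v (pr n k) m) else 0)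
      = - ∑ r ∈ Finset.Ico (pr n m) (t + 1),
        Jc n v (pr n r) r • (z n q v (pr n r) m * z n q v r m) := by
    rw [eq_neg_iff_add_eq_zero]
    refine Eq.trans ?_ ho
    have e : ∑ r ∈ Finset.Ico (pr n m) (t + 1),
        Jc n v (pr n r) r • (z n q v (pr n r) m * z n q v r m)
        = ∑ k ∈ Finset.Icc 1 n, if k < pr n t then 0 else
          Jc n v k (pr n k) • (z n q v k m * z n q v (pr n k) m) := by
      have e0 : ∀ k, (if k < pr n t then 0 else
          Jc n v k (pr n k) • (z n q v k m * z n q v (pr n k) m)) = if ¬ k < pr n t then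
          Jc n v k (pr n k) • (z n q v k m * z n q v (pr n k) m) else 0 := by
        intro k; split_ifs <;> rfl
      simp only [e0]
      rw [← Finset.sum_filter]
      symm
      apply Finset.sum_bij_ne_zero (fun k _ _ => pr n k)
      · intro k hk hk0
        simp only [Finset.mem_filter, Finset.mem_Icc] at hk
        have : k ≤ m := by
          by_contra hc
          apply hk0; rw [z_lower n q v k m (by omega)]; simp
        simp only [Finset.mem_Ico]
        unfold pr at *; omega
      · intro a ha _ b hb _ hab
        simp only [Finset.mem_filter, Finset.mem_Icc] at ha hb
        unfold pr at *; omega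
      · intro r hr hr0
        simp only [Finset.mem_Ico] at hr
        have hpp : pr n (pr n r) = r := by unfold pr at *; omega
        refine ⟨pr n r, ?_, ?_, hpp⟩
        · simp only [Finset.mem_filter, Finset.mem_Icc]; unfold pr at *; omega
        · rw [hpp]; exact hr0
      · intro k hk _
        simp only [Finset.mem_filter, Finset.mem_Icc] at hk
        have hpp : pr n (pr n k) = k := by unfold pr at *; omega
        rw [hpp]
    rw [e, ← Finset.sum_add_distrib]
    refine Finset.sum_congr rfl fun k _ => ?_
    split_ifs <;> simp
  rw [hS, smul_neg, sub_neg_eq_add, ← smul_smul, Finset.smul_sum] at h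
  have hT : ∑ r ∈ Finset.Ico (pr n m) (t + 1), Jc n v t (pr n t) •
        Jc n v (pr n r) r • (z n q v (pr n r) m * z n q v r m)
      = (q ^ (t : ℤ)) • (∑ r ∈ Finset.Ico (pr n m) t,
        (q ^ (-(r : ℤ))) • (z n q v (pr n r) m * z n q v r m))
        + z n q v (pr n t) m * z n q v t m := by
    rw [Finset.sum_Ico_succ_top (by omega), Finset.smul_sum]
    congr 1
    · refine Finset.sum_congr rfl fun r hr => ?_
      simp only [Finset.mem_Ico] at hr
      rw [smul_smul, smul_smul, Jc_lo n q v hv hv0 r t (by omega) (by omega), ← zpow_add₀ hq0]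
      rfl
    · rw [smul_smul, Jc_lo n q v hv hv0 t t (by omega) (by omega)]; simp
  rw [hT] at h
  generalize z n q v (pr n t) m * z n q v t m = Y at *
  generalize z n q v t m * z n q v (pr n t) m = X at *
  generalize ∑ r ∈ Finset.Ico (pr n m) t,
        (q ^ (-(r : ℤ))) • (z n q v (pr n r) m * z n q v r m) = A at *
  rw [← sub_eq_zero] at h ⊢
  have h3 : (-q⁻¹) • (q • X - (q ^ (-1 : ℤ) • Y + (q - q⁻¹) • X + (q - q⁻¹) • (q ^ (t : ℤ) • A + Y))) = 0 := by
    rw [h, smul_zero]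
  rw [← h3]
  simp only [zpow_neg, zpow_one, show (q ^ (2 : ℤ)) = q * q by rw [zpow_ofNat, sq]]
  match_scalars <;> field_simp <;> ring

lemma col_sum (n : ℕ) (q v : ℂ) (hq0 : q ≠ 0) (hv : v ^ 2 = q) (m : ℕ) (hm : m ≤ n) (t : ℕ)
    (h1 : pr n m ≤ t) (ht : t ≤ n) (h2 : 2 * t < n + 3) :
    ∑ r ∈ Finset.Ico (pr n m) t, (q ^ (-(r : ℤ))) • (z n q v (pr n r) m * z n q v r m)
     = (q ^ (-2 * (t : ℤ))) •
      ∑ r ∈ Finset.Ico (pr n m) t, (q ^ (r : ℤ)) • (z n q v r m * z n q v (pr n r) m) := by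
  induction t, h1 using Nat.le_induction with
  | base => simp
  | succ t h1 ih =>
    have hs := col_step n q v hq0 hv t m (by unfold pr at *; omega) (by unfold pr at *; omega)
      (by unfold pr at *; omega) hm
    have ih := ih (by omega) (by omega)
    rw [Finset.sum_Ico_succ_top h1, Finset.sum_Ico_succ_top h1, hs, ih]
    generalize z n q v t m * z n q v (pr n t) m = X at *
    generalize ∑ r ∈ Finset.Ico (pr n m) t, (q ^ (r : ℤ)) • (z n q v r m * z n q v (pr n r) m) = B
    have e : q ^ (-2 * ((t + 1 : ℕ) : ℤ)) = (q ^ (t : ℤ))⁻¹ * (q ^ (t : ℤ))⁻¹ * (q⁻¹ * q⁻¹) := by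
      rw [← zpow_neg, ← zpow_neg_one, ← zpow_add₀ hq0, ← zpow_add₀ hq0, ← zpow_add₀ hq0]
      congr 1; push_cast; ring
    have e2 : q ^ (-2 * (t : ℤ)) = (q ^ (t : ℤ))⁻¹ * (q ^ (t : ℤ))⁻¹ := by
      rw [← zpow_neg, ← zpow_add₀ hq0]; congr 1; ring
    have hQ : q ^ (t : ℤ) ≠ 0 := zpow_ne_zero _ hq0
    rw [e, e2]
    simp only [zpow_neg, show (q ^ (2 : ℤ)) = q * q by rw [zpow_ofNat, sq]]
    generalize q ^ (t : ℤ) = Q at *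
    match_scalars <;> field_simp <;> ring

/-- Column relations in the quantum Borel algebra `𝒪_q(B⁺)` of type `SO_n`. -/
theorem column_relations (n : ℕ) (hn : 3 ≤ n) (q v : ℂ) (hq0 : q ≠ 0) (hv : v ^ 2 = q) :
    (∀ t s j : ℕ, 1 ≤ t → t < s → s ≤ j → j ≤ n → s ≠ pr n t → 2 * j ≠ n + 1 →
      z n q v s j * z n q v t j = q⁻¹ • (z n q v t j * z n q v s j)) ∧
    (∀ t j : ℕ, 1 ≤ t → t < pr n t → pr n t ≤ j → j ≤ n →
      z n q v (pr n t) j * z n q v t j =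
        (q ^ (-2 : ℤ)) • (z n q v t j * z n q v (pr n t) j) -
          (q - q⁻¹) •
            ∑ r ∈ Finset.Ico (pr n j) t,
              (q ^ ((r : ℤ) - (t : ℤ) - 1)) • (z n q v r j * z n q v (pr n r) j)) ∧
    (Odd n → ∀ t j : ℕ, 1 ≤ t → t < (n + 1) / 2 → (n + 1) / 2 < j → j ≤ n →
      z n q v ((n + 1) / 2) j * z n q v t j =
        q⁻¹ • (z n q v t j * z n q v ((n + 1) / 2) j)) := by
  have hA : ∀ t s j : ℕ, 1 ≤ t → t < s → s ≤ j → j ≤ n → s ≠ pr n t → 2 * j ≠ n + 1 →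
      z n q v s j * z n q v t j = q⁻¹ • (z n q v t j * z n q v s j) := by
    intro t s j h1 h2 h3 h4 h5 h6
    have h := col_frt n q v t s j (by simp only [Finset.mem_Icc]; omega)
      (by simp only [Finset.mem_Icc]; omega) (by simp only [Finset.mem_Icc]; omega) h6 h2
    have hJ : Jc n v t s = 0 := by unfold Jc; rw [if_neg h5]
    rw [if_neg h5, hJ, mul_zero, zero_smul, sub_zero, neg_zero, zpow_zero, one_smul, ssmul] at h
    generalize z n q v t j * z n q v s j = X at *
    rw [← sub_eq_zero] at h ⊢
    rw [← neg_eq_zero, ← h]; abel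
  refine ⟨hA, ?_, ?_⟩
  · intro t j h1 h2 h3 h4
    rw [col_step n q v hq0 hv t j h1 h2 h3 h4,
      col_sum n q v hq0 hv j h4 t (by unfold pr at *; omega) (by unfold pr at *; omega)
        (by unfold pr at *; omega)]
    congr 1
    rw [smul_smul, Finset.smul_sum, Finset.smul_sum]
    refine Finset.sum_congr rfl fun r _ => ?_
    rw [smul_smul, smul_smul]
    congr 1
    have e2 : q ^ (-2 * (t : ℤ)) = (q ^ (t : ℤ))⁻¹ * (q ^ (t : ℤ))⁻¹ := by
      rw [← zpow_neg, ← zpow_add₀ hq0]; congr 1; ring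
    have hQ : q ^ (t : ℤ) ≠ 0 := zpow_ne_zero _ hq0
    rw [e2, zpow_sub₀ hq0, zpow_sub₀ hq0, zpow_one, zpow_neg,
      show (q ^ (2 : ℤ)) = q * q by rw [zpow_ofNat, sq]]
    generalize q ^ (t : ℤ) = Q at *
    field_simp
  · rintro ⟨k, hk⟩ t j h1 h2 h3 h4
    exact hA t _ j h1 h2 (by omega) h4 (by unfold pr; omega) (by omega)

end SOq
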